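/- There is a constant C > 0 such that the following holds. For all numbers of jobs n ≥ 1 and machines m ≥ 1, all values v : Fin n × Fin m → ℝ with v ≥ 0, sizes s : Fin n × Fin m → ℝ with s > 0, and capacities c : Fin m → ℝ with c ≥ 0, there exists a map A from edge sets E ⊆ Fin n × Fin m to finitely supported probability distributions over assignments x : Fin n → Option (Fin m) such that: (i) every assignment in the support of A(E) is feasible for GAP[E]; (ii) A is truthful in expectation: for every E, every job i, and every set E'_i of pairs with first coordinate i, letting E' = (E \ E_i) ∪ E'_i, the expected value ∑_{j : (i,j) ∈ E, x(i) = some j} v(i,j) under A(E) is at least that under A(E'); and (iii) for every E, C·(1 + log n) · E_{x ~ A(E)}[welfare(x)] ≥ the maximum welfare of a feasible assignment for GAP[E]. That is, there is an O(log n)-approximate mechanism without money for the generalized assignment problem that is truthful-in-expectation in the private graph model. -/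

import Mathlib

/-- Feasibility of an assignment for GAP[E] (machine-dependent sizes and values). -/
def GAPFeasible {n m : ℕ} (s : Fin n × Fin m → ℝ) (c : Fin m → ℝ)
    (E : Finset (Fin n × Fin m)) (x : Fin n → Option (Fin m)) : Prop :=
  (∀ i j, x i = some j → (i, j) ∈ E) ∧
    ∀ j, ∑ i ∈ Finset.univ.filter (fun i => x i = some j), s (i, j) ≤ c j

/-- Welfare of an assignment in GAP: assigned job `i` contributes `v (i,j)`. -/
def GAPWelfare {n m : ℕ} (v : Fin n × Fin m → ℝ) (x : Fin n → Option (Fin m)) : ℝ :=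
  ∑ i, ∑ j ∈ Finset.univ.filter (fun j => x i = some j), v (i, j)

open Classical in
/-- One greedy step: accept the edge `e` if allowed, the job is free and the machine has quota. -/
noncomputable def gstep {n m : ℕ} (q : ℕ) (P : Finset (Fin n × Fin m))
    (x : Fin n → Option (Fin m)) (e : Fin n × Fin m) : Fin n → Option (Fin m) :=
  if e ∈ P ∧ x e.1 = none ∧ (Finset.univ.filter (fun i => x i = some e.2)).card < q then
    Function.update x e.1 (some e.2) else x

/-- The greedy run over a list of edges. -/
noncomputable def grun {n m : ℕ} (q : ℕ) (P : Finset (Fin n × Fin m))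
    (L : List (Fin n × Fin m)) (x : Fin n → Option (Fin m)) : Fin n → Option (Fin m) :=
  L.foldl (gstep q P) x

theorem gstep_mono {n m : ℕ} (q : ℕ) (P : Finset (Fin n × Fin m))
    (x : Fin n → Option (Fin m)) (e : Fin n × Fin m) (i : Fin n) (j : Fin m)
    (h : x i = some j) : gstep q P x e i = some j := by
  unfold gstep
  split_ifs with hc
  · have : i ≠ e.1 := by
      rintro rfl
      rw [h] at hc
      simp at hc
    rw [Function.update_of_ne this]
    exact h
  · exact h

theorem grun_mono {n m : ℕ} (q : ℕ) (P : Finset (Fin n × Fin m))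
    (L : List (Fin n × Fin m)) (x : Fin n → Option (Fin m)) (i : Fin n) (j : Fin m)
    (h : x i = some j) : grun q P L x i = some j := by
  induction L generalizing x with
  | nil => exact h
  | cons e L ih => exact ih _ (gstep_mono q P x e i j h)

theorem gstep_origin {n m : ℕ} (q : ℕ) (P : Finset (Fin n × Fin m))
    (x : Fin n → Option (Fin m)) (e : Fin n × Fin m) (i : Fin n) (j : Fin m)
    (h : gstep q P x e i = some j) : x i = some j ∨ (e = (i, j) ∧ e ∈ P) := by
  unfold gstep at h
  split_ifs at h with hc
  · by_cases hi : i = e.1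
    · subst hi
      simp at h
      right
      exact ⟨by rw [← h], hc.1⟩
    · rw [Function.update_of_ne hi] at h
      exact Or.inl h
  · exact Or.inl h

theorem grun_origin {n m : ℕ} (q : ℕ) (P : Finset (Fin n × Fin m))
    (L : List (Fin n × Fin m)) (x : Fin n → Option (Fin m)) (i : Fin n) (j : Fin m)
    (h : grun q P L x i = some j) : x i = some j ∨ ((i, j) ∈ L ∧ (i, j) ∈ P) := by
  induction L generalizing x with
  | nil => exact Or.inl h
  | cons e L ih =>
    rcases ih _ h with h1 | h1
    · rcases gstep_origin q P x e i j h1 with h2 | ⟨h2, h3⟩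
      · exact Or.inl h2
      · subst h2
        exact Or.inr ⟨by simp, h3⟩
    · exact Or.inr ⟨by simp [h1.1], h1.2⟩

theorem gstep_quota {n m : ℕ} (q : ℕ) (P : Finset (Fin n × Fin m))
    (x : Fin n → Option (Fin m)) (e : Fin n × Fin m)
    (h : ∀ j, (Finset.univ.filter (fun i => x i = some j)).card ≤ q) (j : Fin m) :
    (Finset.univ.filter (fun i => gstep q P x e i = some j)).card ≤ q := by
  unfold gstep
  split_ifs with hc
  · by_cases hj : j = e.2
    · subst hj
      have : (Finset.univ.filter (fun i => Function.update x e.1 (some e.2) i = some e.2)) ⊆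
          insert e.1 (Finset.univ.filter (fun i => x i = some e.2)) := by
        intro i hi
        by_cases h1 : i = e.1
        · simp [h1]
        · simp [Function.update_of_ne h1] at hi
          simp [hi]
      have h2 := Finset.card_le_card this
      have h3 := Finset.card_insert_le e.1 (Finset.univ.filter (fun i => x i = some e.2))
      have h4 : (Finset.univ.filter (fun i => x i = some e.2)).card < q := by
        convert hc.2.2
      omega
    · refine le_trans (Finset.card_le_card ?_) (h j)
      intro i hi
      by_cases h1 : i = e.1
      · subst h1
        simp at hi
        exact absurd hi.symm hj
      · simp [Function.update_of_ne h1] at hi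
        simp [hi]
  · exact h j

theorem grun_quota {n m : ℕ} (q : ℕ) (P : Finset (Fin n × Fin m))
    (L : List (Fin n × Fin m)) (x : Fin n → Option (Fin m))
    (h : ∀ j, (Finset.univ.filter (fun i => x i = some j)).card ≤ q) (j : Fin m) :
    (Finset.univ.filter (fun i => grun q P L x i = some j)).card ≤ q := by
  induction L generalizing x with
  | nil => exact h j
  | cons e L ih => exact ih _ (gstep_quota q P x e h)

/-- utility of job `i` with true edges `E` -/
noncomputable def gutil {n m : ℕ} (v : Fin n × Fin m → ℝ) (E : Finset (Fin n × Fin m))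
    (i : Fin n) (x : Fin n → Option (Fin m)) : ℝ :=
  ∑ j ∈ Finset.univ.filter (fun j => (i, j) ∈ E ∧ x i = some j), v (i, j)

theorem gutil_some {n m : ℕ} (v : Fin n × Fin m → ℝ) (E : Finset (Fin n × Fin m))
    (i : Fin n) (x : Fin n → Option (Fin m)) (j : Fin m) (h : x i = some j) :
    gutil v E i x = if (i, j) ∈ E then v (i, j) else 0 := by
  unfold gutil
  rw [Finset.sum_filter, Finset.sum_eq_single j]
  · simp [h]
  · intro b _ hb
    rw [if_neg]
    rintro ⟨_, h2⟩
    rw [h] at h2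
    exact hb (Option.some.inj h2).symm
  · simp

theorem gutil_none {n m : ℕ} (v : Fin n × Fin m → ℝ) (E : Finset (Fin n × Fin m))
    (i : Fin n) (x : Fin n → Option (Fin m)) (h : x i = none) :
    gutil v E i x = 0 := by
  unfold gutil
  simp [h]

theorem gutil_nonneg {n m : ℕ} (v : Fin n × Fin m → ℝ) (hv : ∀ p, 0 ≤ v p)
    (E : Finset (Fin n × Fin m)) (i : Fin n) (x : Fin n → Option (Fin m)) :
    0 ≤ gutil v E i x := Finset.sum_nonneg (fun _ _ => hv _)

theorem gutil_le {n m : ℕ} (v : Fin n × Fin m → ℝ) (E : Finset (Fin n × Fin m))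
    (q : ℕ) (P : Finset (Fin n × Fin m)) (i : Fin n)
    (L : List (Fin n × Fin m)) (x : Fin n → Option (Fin m)) (hx : x i = none)
    (w : ℝ) (hw : 0 ≤ w) (hL : ∀ e ∈ L, v e ≤ w) :
    gutil v E i (grun q P L x) ≤ w := by
  rcases hy : grun q P L x i with _ | j
  · rw [gutil_none v E i _ hy]; exact hw
  · rw [gutil_some v E i _ j hy]
    split_ifs
    · rcases grun_origin q P L x i j hy with h | h
      · rw [hx] at h; simp at h
      · exact hL _ h.1
    · exact hw

theorem grun_truth {n m : ℕ} (v : Fin n × Fin m → ℝ) (hv : ∀ p, 0 ≤ v p)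
    (E P P' : Finset (Fin n × Fin m)) (q : ℕ) (i : Fin n)
    (h1 : ∀ e, e.1 ≠ i → (e ∈ P ↔ e ∈ P')) (h2 : ∀ e ∈ P, e ∈ E)
    (h3 : ∀ e ∈ P', e ∈ E → e ∈ P)
    (L : List (Fin n × Fin m)) (hL : L.Pairwise (fun a b => v b ≤ v a))
    (x : Fin n → Option (Fin m)) (hx : x i = none) :
    gutil v E i (grun q P' L x) ≤ gutil v E i (grun q P L x) := by
  induction L generalizing x with
  | nil => exact le_refl _
  | cons e L ih =>
    rw [List.pairwise_cons] at hL
    change gutil v E i (grun q P' L (gstep q P' x e)) ≤ gutil v E i (grun q P L (gstep q P x e))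
    by_cases hei : e.1 = i
    · by_cases hq : (Finset.univ.filter (fun i => x i = some e.2)).card < q
      · have key : ∀ Q : Finset (Fin n × Fin m), gstep q Q x e =
            if e ∈ Q then Function.update x e.1 (some e.2) else x := by
          intro Q
          unfold gstep
          have h0 : x e.1 = none := by rw [hei]; exact hx
          by_cases hQ : e ∈ Q
          · rw [if_pos hQ, if_pos]
            refine ⟨hQ, h0, ?_⟩
            convert hq
          · rw [if_neg hQ, if_neg]
            tauto
        have hup : Function.update x e.1 (some e.2) i = some e.2 := by rw [hei]; simp
        have he : (i, e.2) = e := by rw [← hei]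
        have hval : ∀ Q : Finset (Fin n × Fin m),
            gutil v E i (grun q Q L (Function.update x e.1 (some e.2))) =
              if e ∈ E then v e else 0 := by
          intro Q
          rw [gutil_some v E i _ e.2 (grun_mono q Q L _ i e.2 hup), he]
        rw [key P, key P']
        by_cases hP : e ∈ P
        · rw [if_pos hP, hval P, if_pos (h2 e hP)]
          by_cases hP' : e ∈ P'
          · rw [if_pos hP', hval P', if_pos (h2 e hP)]
          · rw [if_neg hP']
            exact gutil_le v E q P' i L x hx _ (hv e) hL.1
        · rw [if_neg hP]
          by_cases hP' : e ∈ P'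
          · rw [if_pos hP', hval P', if_neg (fun h => hP (h3 e hP' h))]
            exact gutil_nonneg v hv E i _
          · rw [if_neg hP']
            exact ih hL.2 x hx
      · have key : ∀ Q : Finset (Fin n × Fin m), gstep q Q x e = x := by
          intro Q
          unfold gstep
          rw [if_neg]
          rintro ⟨_, _, h⟩
          apply hq
          convert h
        rw [key, key]
        exact ih hL.2 x hx
    · have hs : gstep q P' x e = gstep q P x e := by
        unfold gstep
        simp only [h1 e hei]
      rw [hs]
      apply ih hL.2
      unfold gstep
      split_ifs
      · rw [Function.update_of_ne (Ne.symm hei)]; exact hx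
      · exact hx

/-- value collected by job `i` -/
noncomputable def gval {n m : ℕ} (v : Fin n × Fin m → ℝ)
    (x : Fin n → Option (Fin m)) (i : Fin n) : ℝ :=
  ∑ j ∈ Finset.univ.filter (fun j => x i = some j), v (i, j)

/-- value collected on machine `j` -/
noncomputable def gload {n m : ℕ} (v : Fin n × Fin m → ℝ)
    (x : Fin n → Option (Fin m)) (j : Fin m) : ℝ :=
  ∑ i ∈ Finset.univ.filter (fun i => x i = some j), v (i, j)

theorem grun_stable {n m : ℕ} (v : Fin n × Fin m → ℝ) (hv : ∀ p, 0 ≤ v p)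
    (P : Finset (Fin n × Fin m)) (q : ℕ)
    (L : List (Fin n × Fin m)) (hL : L.Pairwise (fun a b => v b ≤ v a))
    (x : Fin n → Option (Fin m))
    (hx : ∀ i j, x i = some j → ∀ e ∈ L, v e ≤ v (i, j))
    (e : Fin n × Fin m) (he : e ∈ L) (heP : e ∈ P) :
    v e ≤ gval v (grun q P L x) e.1 ∨ q * v e ≤ gload v (grun q P L x) e.2 := by
  induction L generalizing x with
  | nil => simp at he
  | cons a L ih =>
    have hL' := List.pairwise_cons.mp hL
    have hinv : ∀ i j, gstep q P x a i = some j → ∀ e ∈ L, v e ≤ v (i, j) := by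
      intro i j hij e he
      rcases gstep_origin q P x a i j hij with h | ⟨h, _⟩
      · exact hx i j h e (by simp [he])
      · rw [← h]; exact hL'.1 e he
    rcases List.mem_cons.mp he with h | h
    · subst h
      have hvalpos : ∀ j, grun q P (e :: L) x e.1 = some j → v e ≤ v (e.1, j) →
          v e ≤ gval v (grun q P (e :: L) x) e.1 := by
        intro j hj hle
        refine hle.trans ?_
        unfold gval
        exact Finset.single_le_sum (f := fun j => v (e.1, j)) (fun _ _ => hv _)
          (by simp [hj])
      rcases hxe : x e.1 with _ | j
      · by_cases hq : (Finset.univ.filter (fun i => x i = some e.2)).card < q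
        · left
          refine hvalpos e.2 ?_ (le_refl _)
          apply grun_mono q P L
          unfold gstep
          rw [if_pos]
          · simp
          · refine ⟨heP, hxe, ?_⟩
            convert hq
        · right
          push Not at hq
          calc (q : ℝ) * v e ≤ ((Finset.univ.filter (fun i => x i = some e.2)).card : ℝ) * v e := by
                apply mul_le_mul_of_nonneg_right _ (hv e)
                exact_mod_cast hq
            _ = ∑ i ∈ Finset.univ.filter (fun i => x i = some e.2), v e := by
                rw [Finset.sum_const, nsmul_eq_mul]
            _ ≤ ∑ i ∈ Finset.univ.filter (fun i => x i = some e.2), v (i, e.2) := by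
                apply Finset.sum_le_sum
                intro i hi
                exact hx i e.2 (by simpa using hi) e (by simp)
            _ ≤ _ := by
                unfold gload
                apply Finset.sum_le_sum_of_subset_of_nonneg
                · intro i hi
                  have : x i = some e.2 := by simpa using hi
                  simp [grun_mono q P (e :: L) x i e.2 this]
                · intro _ _ _
                  exact hv _
      · left
        exact hvalpos j (grun_mono q P (e :: L) x e.1 j hxe) (hx e.1 j hxe e (by simp))
    · exact ih hL'.2 _ hinv h

theorem gload_sum {n m : ℕ} (v : Fin n × Fin m → ℝ) (x : Fin n → Option (Fin m)) :
    ∑ j, gload v x j = ∑ i, gval v x i := by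
  unfold gload gval
  simp only [Finset.sum_filter]
  exact Finset.sum_comm

theorem grun_approx {n m : ℕ} (v : Fin n × Fin m → ℝ) (hv : ∀ p, 0 ≤ v p)
    (P : Finset (Fin n × Fin m)) (q : ℕ) (hq : 0 < q)
    (L : List (Fin n × Fin m)) (hL : L.Pairwise (fun a b => v b ≤ v a))
    (hall : ∀ e, e ∈ L)
    (M : Finset (Fin n × Fin m)) (hMP : M ⊆ P)
    (hinj : ∀ a ∈ M, ∀ b ∈ M, a.1 = b.1 → a = b)
    (hcard : ∀ j, (M.filter (fun e => e.2 = j)).card ≤ 2 * q) :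
    ∑ e ∈ M, v e ≤ 3 * GAPWelfare v (grun q P L (fun _ => none)) := by
  set y := grun q P L (fun _ => none) with hy
  have hW : GAPWelfare v y = ∑ i, gval v y i := rfl
  have hq' : (0 : ℝ) < q := by exact_mod_cast hq
  have hval0 : ∀ i, 0 ≤ gval v y i := fun i => Finset.sum_nonneg (fun _ _ => hv _)
  have hload0 : ∀ j, 0 ≤ gload v y j := fun i => Finset.sum_nonneg (fun _ _ => hv _)
  have hst : ∀ e ∈ M, v e ≤ gval v y e.1 + gload v y e.2 / q := by
    intro e he
    have hd : 0 ≤ gload v y e.2 / q := div_nonneg (hload0 _) hq'.le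
    rcases grun_stable v hv P q L hL (fun _ => none) (by simp) e (hall e) (hMP he) with h | h
    · rw [← hy] at h; linarith
    · rw [← hy] at h
      have : v e ≤ gload v y e.2 / q := by
        rw [le_div_iff₀ hq']; linarith
      linarith [hval0 e.1]
  have hA : ∑ e ∈ M, gval v y e.1 ≤ ∑ i, gval v y i := by
    rw [← Finset.sum_image (f := fun i => gval v y i) (g := Prod.fst) (s := M)
      (fun a ha b hb h => hinj a ha b hb h)]
    exact Finset.sum_le_sum_of_subset_of_nonneg (Finset.subset_univ _) (fun i _ _ => hval0 i)
  have hB : ∑ e ∈ M, gload v y e.2 / q ≤ 2 * ∑ i, gval v y i := by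
    rw [← gload_sum, Finset.mul_sum,
      ← Finset.sum_fiberwise M (fun e => e.2) (fun e => gload v y e.2 / q)]
    apply Finset.sum_le_sum
    intro j _
    have : ∑ e ∈ M.filter (fun e => e.2 = j), gload v y e.2 / q =
        ∑ e ∈ M.filter (fun e => e.2 = j), gload v y j / q := by
      apply Finset.sum_congr rfl
      intro e he
      rw [(Finset.mem_filter.mp he).2]
    rw [this, Finset.sum_const, nsmul_eq_mul]
    have h1 : ((M.filter (fun e => e.2 = j)).card : ℝ) ≤ 2 * q := by exact_mod_cast hcard j
    calc _ ≤ (2 * q : ℝ) * (gload v y j / q) :=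
          mul_le_mul_of_nonneg_right h1 (div_nonneg (hload0 _) hq'.le)
      _ = 2 * gload v y j := by field_simp
  calc ∑ e ∈ M, v e ≤ ∑ e ∈ M, (gval v y e.1 + gload v y e.2 / q) := Finset.sum_le_sum hst
    _ ≤ _ := by rw [Finset.sum_add_distrib, hW]; linarith

theorem exists_sorted_edges {n m : ℕ} (v : Fin n × Fin m → ℝ) :
    ∃ L : List (Fin n × Fin m), L.Pairwise (fun a b => v b ≤ v a) ∧ ∀ e, e ∈ L := by
  classical
  refine ⟨(Finset.univ : Finset (Fin n × Fin m)).toList.mergeSort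
    (fun a b => decide (v b ≤ v a)), ?_, ?_⟩
  · have := List.pairwise_mergeSort (le := fun a b : Fin n × Fin m => decide (v b ≤ v a))
      (by intro a b c h1 h2; simp at *; linarith)
      (by intro a b; simp; exact le_total _ _)
      (Finset.univ : Finset (Fin n × Fin m)).toList
    simpa using this
  · intro e
    simp

open Classical in
/-- size class of an edge -/
noncomputable def gcls {n m : ℕ} (s : Fin n × Fin m → ℝ) (c : Fin m → ℝ) (K : ℕ)
    (e : Fin n × Fin m) : ℕ :=
  Nat.findGreatest (fun k => s e * 2 ^ k ≤ c e.2) K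

open Classical in
/-- edges of size class `k` -/
noncomputable def gF {n m : ℕ} (s : Fin n × Fin m → ℝ) (c : Fin m → ℝ) (K k : ℕ) :
    Finset (Fin n × Fin m) :=
  Finset.univ.filter (fun e => s e ≤ c e.2 ∧ gcls s c K e = k)

theorem gF_le {n m : ℕ} (s : Fin n × Fin m → ℝ) (c : Fin m → ℝ) (K k : ℕ)
    (e : Fin n × Fin m) (he : e ∈ gF s c K k) : s e * 2 ^ k ≤ c e.2 := by
  unfold gF gcls at he
  simp only [Finset.mem_filter, Finset.mem_univ, true_and] at he
  obtain ⟨h1, h2⟩ := he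
  have := Nat.findGreatest_spec (P := fun k => s e * 2 ^ k ≤ c e.2) (Nat.zero_le K) (by simpa using h1)
  rw [h2] at this
  exact this

theorem gF_lt {n m : ℕ} (s : Fin n × Fin m → ℝ) (c : Fin m → ℝ) (K k : ℕ) (hk : k < K)
    (e : Fin n × Fin m) (he : e ∈ gF s c K k) : c e.2 < s e * 2 ^ (k + 1) := by
  unfold gF gcls at he
  simp only [Finset.mem_filter, Finset.mem_univ, true_and] at he
  obtain ⟨h1, h2⟩ := he
  by_contra hcon
  push Not at hcon
  have := Nat.le_findGreatest (P := fun k => s e * 2 ^ k ≤ c e.2) hk hcon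
  omega

theorem clog_bound (n : ℕ) (hn : 1 ≤ n) :
    ((Nat.clog 2 n : ℝ) + 1) ≤ 2 * (1 + Real.log n) := by
  have hn0 : (1 : ℝ) ≤ n := by exact_mod_cast hn
  have hlog : 0 ≤ Real.log n := Real.log_nonneg hn0
  rcases Nat.lt_or_ge 1 n with h | h
  · have h1 : 2 ^ (Nat.clog 2 n).pred < n := Nat.pow_pred_clog_lt_self (by norm_num) h
    have hpos : 0 < Nat.clog 2 n := Nat.clog_pos (by norm_num) h
    obtain ⟨k, hk⟩ : ∃ k, Nat.clog 2 n = k + 1 := ⟨Nat.clog 2 n - 1, by omega⟩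
    rw [hk] at h1 ⊢
    simp only [Nat.pred_succ] at h1
    have h2 : ((2 : ℝ) ^ k) ≤ n := by exact_mod_cast h1.le
    have h3 : Real.log ((2 : ℝ) ^ k) ≤ Real.log n := Real.log_le_log (by positivity) h2
    rw [Real.log_pow] at h3
    have h4 := Real.log_two_gt_d9
    have h5 : (0 : ℝ) ≤ k := Nat.cast_nonneg k
    push_cast
    nlinarith
  · have : n = 1 := by omega
    subst this
    simp

theorem stmt17 :
    ∃ C : ℝ, 0 < C ∧
      ∀ (n m : ℕ), 1 ≤ n → 1 ≤ m →
      ∀ (v s : Fin n × Fin m → ℝ) (c : Fin m → ℝ),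
        (∀ p, 0 ≤ v p) → (∀ p, 0 < s p) → (∀ j, 0 ≤ c j) →
        ∃ A : Finset (Fin n × Fin m) → (Fin n → Option (Fin m)) → ℝ,
          (∀ E x, 0 ≤ A E x) ∧
          (∀ E, ∑ x : Fin n → Option (Fin m), A E x = 1) ∧
          (∀ E x, A E x ≠ 0 → GAPFeasible s c E x) ∧
          (∀ (E Ei' : Finset (Fin n × Fin m)) (i : Fin n), (∀ e ∈ Ei', e.1 = i) →
            ∑ x : Fin n → Option (Fin m),
                A ((E \ E.filter (fun e => e.1 = i)) ∪ Ei') x *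
                  ∑ j ∈ Finset.univ.filter (fun j => (i, j) ∈ E ∧ x i = some j), v (i, j)
              ≤ ∑ x : Fin n → Option (Fin m),
                  A E x *
                    ∑ j ∈ Finset.univ.filter (fun j => (i, j) ∈ E ∧ x i = some j), v (i, j)) ∧
          (∀ E z, GAPFeasible s c E z →
            GAPWelfare v z ≤
              C * (1 + Real.log n) *
                ∑ x : Fin n → Option (Fin m), A E x * GAPWelfare v x) := by
  classical
  refine ⟨6, by norm_num, ?_⟩
  intro n m hn hm v s c hv hs hc
  obtain ⟨L, hL, hall⟩ := exists_sorted_edges v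
  set K := Nat.clog 2 n with hK
  have hnK : n ≤ 2 ^ K := Nat.le_pow_clog (by norm_num) n
  let G : ℕ → Finset (Fin n × Fin m) → (Fin n → Option (Fin m)) :=
    fun k E => grun (2 ^ k) (E ∩ gF s c K k) L (fun _ => none)
  have hKpos : (0 : ℝ) < (K : ℝ) + 1 := by positivity
  let A : Finset (Fin n × Fin m) → (Fin n → Option (Fin m)) → ℝ :=
    fun E x => ∑ k ∈ Finset.range (K + 1), if G k E = x then 1 / ((K : ℝ) + 1) else 0
  have hA : ∀ E (f : (Fin n → Option (Fin m)) → ℝ), ∑ x, A E x * f x =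
      1 / ((K : ℝ) + 1) * ∑ k ∈ Finset.range (K + 1), f (G k E) := by
    intro E f
    simp only [A, Finset.sum_mul, Finset.mul_sum]
    rw [Finset.sum_comm]
    apply Finset.sum_congr rfl
    intro k _
    simp [ite_mul]
  refine ⟨A, ?_, ?_, ?_, ?_, ?_⟩
  · intro E x
    apply Finset.sum_nonneg
    intro k _
    split_ifs
    · positivity
    · exact le_refl _
  · intro E
    have := hA E (fun _ => 1)
    simp only [mul_one] at this
    rw [this]
    simp
    field_simp
  · intro E x hx
    obtain ⟨k, _, hk⟩ := Finset.exists_ne_zero_of_sum_ne_zero hx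
    have hG : G k E = x := by
      by_contra h
      simp [h] at hk
    subst hG
    have horig : ∀ i j, G k E i = some j → (i, j) ∈ E ∩ gF s c K k := by
      intro i j hij
      rcases grun_origin _ _ _ _ i j hij with h | h
      · simp at h
      · exact h.2
    refine ⟨fun i j hij => (Finset.mem_inter.mp (horig i j hij)).1, ?_⟩
    intro j
    have hcard : (Finset.univ.filter (fun i => G k E i = some j)).card ≤ 2 ^ k :=
      grun_quota _ _ _ _ (by simp) j
    have h2 : (0 : ℝ) < 2 ^ k := by positivity
    calc _ ≤ ∑ i ∈ Finset.univ.filter (fun i => G k E i = some j), c j / 2 ^ k := by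
          apply Finset.sum_le_sum
          intro i hi
          have h1 := horig i j (by simpa using hi)
          rw [le_div_iff₀ h2]
          exact gF_le s c K k (i, j) (Finset.mem_inter.mp h1).2
      _ = ((Finset.univ.filter (fun i => G k E i = some j)).card : ℝ) * (c j / 2 ^ k) := by
          rw [Finset.sum_const, nsmul_eq_mul]
      _ ≤ (2 ^ k : ℝ) * (c j / 2 ^ k) := by
          apply mul_le_mul_of_nonneg_right _ (div_nonneg (hc j) h2.le)
          exact_mod_cast hcard
      _ = c j := by field_simp
  · intro E Ei' i hEi
    rw [hA _ (fun x => ∑ j ∈ Finset.univ.filter (fun j => (i, j) ∈ E ∧ x i = some j), v (i, j)),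
      hA _ (fun x => ∑ j ∈ Finset.univ.filter (fun j => (i, j) ∈ E ∧ x i = some j), v (i, j))]
    apply mul_le_mul_of_nonneg_left _ (by positivity)
    apply Finset.sum_le_sum
    intro k _
    refine grun_truth v hv E (E ∩ gF s c K k) _ (2 ^ k) i ?_ ?_ ?_ L hL (fun _ => none) rfl
    · intro e he
      have : e ∉ Ei' := fun h => he (hEi e h)
      simp [he, this]
    · intro e he
      exact (Finset.mem_inter.mp he).1
    · intro e he heE
      exact Finset.mem_inter.mpr ⟨heE, (Finset.mem_inter.mp he).2⟩
  · intro E z hz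
    rw [hA]
    have hlog := clog_bound n hn
    set W := ∑ k ∈ Finset.range (K + 1), GAPWelfare v (G k E) with hWdef
    let M : Finset (Fin n × Fin m) := Finset.univ.filter (fun e => z e.1 = some e.2)
    have hM : GAPWelfare v z = ∑ e ∈ M, v e := by
      unfold GAPWelfare
      simp only [M, Finset.sum_filter]
      rw [Fintype.sum_prod_type]
    have hsz : ∀ e ∈ M, s e ≤ c e.2 := by
      intro e he
      refine le_trans ?_ (hz.2 e.2)
      exact Finset.single_le_sum (f := fun i => s (i, e.2)) (fun i _ => (hs _).le)
        (by simpa [M] using he : e.1 ∈ Finset.univ.filter (fun i => z i = some e.2))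
    have hsplit : ∑ e ∈ M, v e = ∑ k ∈ Finset.range (K + 1),
        ∑ e ∈ M.filter (fun e => gcls s c K e = k), v e := by
      rw [Finset.sum_fiberwise_of_maps_to]
      intro e _
      rw [Finset.mem_range, Nat.lt_succ_iff]
      exact Nat.findGreatest_le K
    have hfin : GAPWelfare v z ≤ 3 * W := by
      rw [hM, hsplit, hWdef, Finset.mul_sum]
      apply Finset.sum_le_sum
      intro k hk
      have hMF : ∀ e ∈ M.filter (fun e => gcls s c K e = k), e ∈ gF s c K k := by
        intro e he
        rw [Finset.mem_filter] at he
        simp only [gF, Finset.mem_filter, Finset.mem_univ, true_and]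
        exact ⟨hsz e he.1, he.2⟩
      refine grun_approx v hv (E ∩ gF s c K k) (2 ^ k) (by positivity) L hL hall _ ?_ ?_ ?_
      · intro e he
        refine Finset.mem_inter.mpr ⟨?_, hMF e he⟩
        rw [Finset.mem_filter] at he
        exact hz.1 e.1 e.2 (by simpa [M] using he.1)
      · intro a ha b hb hab
        have h1 : z a.1 = some a.2 := by simpa [M] using (Finset.mem_filter.mp ha).1
        have h2 : z b.1 = some b.2 := by simpa [M] using (Finset.mem_filter.mp hb).1
        rw [hab, h2] at h1
        exact Prod.ext hab (Option.some.inj h1).symm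
      · intro j
        set N := (M.filter (fun e => gcls s c K e = k)).filter (fun e => e.2 = j) with hN
        have hNmem : ∀ e ∈ N, z e.1 = some j ∧ e.2 = j ∧ e ∈ gF s c K k := by
          intro e he
          have h1 := Finset.mem_filter.mp he
          have h2 : z e.1 = some e.2 := by simpa [M] using (Finset.mem_filter.mp h1.1).1
          refine ⟨by rw [h2, h1.2], h1.2, hMF e h1.1⟩
        have hinj : Set.InjOn Prod.fst (N : Set (Fin n × Fin m)) := by
          intro a ha b hb hab
          exact Prod.ext hab (by rw [(hNmem a ha).2.1, (hNmem b hb).2.1])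
        rcases Nat.lt_or_ge k K with hkK | hkK
        · by_contra hcon
          push Not at hcon
          have hpos : (0 : ℝ) < 2 ^ (k + 1) := by positivity
          have hle : ∑ e ∈ N, s e ≤ c j := by
            have : ∑ e ∈ N, s e = ∑ i ∈ N.image Prod.fst, s (i, j) := by
              rw [Finset.sum_image hinj]
              apply Finset.sum_congr rfl
              intro e he
              rw [← (hNmem e he).2.1]
            rw [this]
            refine le_trans ?_ (hz.2 j)
            apply Finset.sum_le_sum_of_subset_of_nonneg
            · intro i hi
              obtain ⟨e, he, rfl⟩ := Finset.mem_image.mp hi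
              simp [(hNmem e he).1]
            · intro i _ _
              exact (hs _).le
          have hne : N.Nonempty := by
            rw [← Finset.card_pos]; omega
          have hlt : ∑ e ∈ N, c j / 2 ^ (k + 1) < ∑ e ∈ N, s e := by
            apply Finset.sum_lt_sum_of_nonempty hne
            intro e he
            rw [div_lt_iff₀ hpos, ← (hNmem e he).2.1]
            exact gF_lt s c K k hkK e (hNmem e he).2.2
          rw [Finset.sum_const, nsmul_eq_mul] at hlt
          have hcc : (2 : ℝ) ^ (k + 1) ≤ N.card := by
            have : 2 ^ (k + 1) ≤ N.card := by rw [pow_succ]; omega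
            exact_mod_cast this
          have : c j ≤ (N.card : ℝ) * (c j / 2 ^ (k + 1)) := by
            calc c j = 2 ^ (k + 1) * (c j / 2 ^ (k + 1)) := by field_simp
              _ ≤ _ := mul_le_mul_of_nonneg_right hcc (div_nonneg (hc j) hpos.le)
          linarith
        · have hkK' : k = K := by
            have := Finset.mem_range.mp hk
            omega
          have h1 : N.card = (N.image Prod.fst).card := (Finset.card_image_of_injOn hinj).symm
          have h2 : (N.image Prod.fst).card ≤ n := by
            simpa using Finset.card_le_univ (N.image Prod.fst)
          rw [hkK']
          omega
    have hW0 : 0 ≤ W := by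
      apply Finset.sum_nonneg
      intro k _
      exact Finset.sum_nonneg (fun i _ => Finset.sum_nonneg (fun _ _ => hv _))
    have hge : (1 : ℝ) ≤ 2 * (1 + Real.log n) * (1 / ((K : ℝ) + 1)) := by
      rw [mul_one_div, le_div_iff₀ hKpos]
      linarith
    calc GAPWelfare v z ≤ 3 * W := hfin
      _ ≤ (2 * (1 + Real.log n) * (1 / ((K : ℝ) + 1))) * (3 * W) :=
          le_mul_of_one_le_left (by positivity) hge
      _ = _ := by ring
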